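/- For every real s with 0 < s < 1, the value ζ(s) is real and strictly negative; that is, Im(ζ(s)) = 0 and Re(ζ(s)) < 0. -/

import Mathlib

/-! Abel summation gives `ζ(s) = s / (s - 1) - s ∫_1^∞ {t} t^(-s-1) dt` for `1 < re s`. The integral
is a Mellin transform, holomorphic on `0 < re s`, so the formula continues analytically to this
half-plane. For real `0 < s < 1`, both terms are real, the first is negative, and the integral is
nonnegative. -/

open Complex Filter MeasureTheory Set Topology Asymptotics

section Mellin

variable {E : Type*} [NormedAddCommGroup E] [NormedSpace ℂ E]

lemma mellin_indicator_Ioi_neg (f : ℝ → E) {c : ℝ} (hc : 0 ≤ c) (s : ℂ) :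
    mellin ((Ioi c).indicator f) (-s) = ∫ t : ℝ in Ioi c, (t : ℂ) ^ (-(s + 1)) • f t := by
  simp only [mellin, ← indicator_smul]
  rw [setIntegral_indicator measurableSet_Ioi, Ioi_inter_Ioi, sup_of_le_right hc]
  simp only [neg_add']

lemma differentiableAt_integral_Ioi_cpow_smul {f : ℝ → E} {a c : ℝ} {s : ℂ}
    (hf : LocallyIntegrableOn f (Ici c)) (hO : f =O[atTop] (· ^ a)) (hc : 0 < c)
    (hs : a < s.re) :
    DifferentiableAt ℂ (fun z : ℂ ↦ ∫ t : ℝ in Ioi c, (t : ℂ) ^ (-(z + 1)) • f t) s := by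
  have h_int : LocallyIntegrableOn ((Ioi c).indicator f) (Ioi 0) := by
    refine (locallyIntegrableOn_iff isOpen_Ioi.isLocallyClosed).2 fun K _ hK ↦ ?_
    rw [IntegrableOn, integrable_indicator_iff measurableSet_Ioi, IntegrableOn,
      Measure.restrict_restrict measurableSet_Ioi]
    exact (hf.integrableOn_compact_subset inter_subset_left
      (hK.inter_left isClosed_Ici)).mono_set (inter_subset_inter_left K Ioi_subset_Ici_self)
  have h_top : (Ioi c).indicator f =O[atTop] (· ^ (-(-a))) := by
    rw [neg_neg]
    exact hO.congr' ((eventually_gt_atTop c).mono fun t ht ↦ (indicator_of_mem ht f).symm) .rfl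
  have h_bot : (Ioi c).indicator f =O[𝓝[>] 0] (· ^ (-(-s.re - 1))) := by
    refine (isBigO_zero _ _).congr' ?_ .rfl
    filter_upwards [nhdsWithin_le_nhds (Iio_mem_nhds hc)] with t ht
    exact (indicator_of_notMem (notMem_Ioi.2 (mem_Iio.1 ht).le) f).symm
  have h_mellin : DifferentiableAt ℂ (mellin ((Ioi c).indicator f)) (-s) :=
    mellin_differentiableAt_of_isBigO_rpow h_int h_top (by simpa using hs) h_bot (by simp)
  simp only [← mellin_indicator_Ioi_neg f hc.le]
  exact h_mellin.comp s differentiableAt_id.neg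

end Mellin

lemma norm_ofReal_fract_le_one (t : ℝ) : ‖((Int.fract t : ℝ) : ℂ)‖ ≤ 1 := by
  rw [Complex.norm_of_nonneg (Int.fract_nonneg t)]
  exact (Int.fract_lt_one t).le

lemma aestronglyMeasurable_ofReal_fract (μ : Measure ℝ) :
    AEStronglyMeasurable (fun t : ℝ ↦ ((Int.fract t : ℝ) : ℂ)) μ :=
  (measurable_ofReal.comp measurable_fract).aestronglyMeasurable

lemma differentiableAt_integral_cpow_mul_fract {s : ℂ} (hs : 0 < s.re) :
    DifferentiableAt ℂ
      (fun z : ℂ ↦ ∫ t : ℝ in Ioi 1, (t : ℂ) ^ (-(z + 1)) * (Int.fract t : ℝ)) s := by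
  refine differentiableAt_integral_Ioi_cpow_smul (a := 0) ?_ ?_ zero_lt_one hs
  · exact ((locallyIntegrable_const (1 : ℝ)).mono (aestronglyMeasurable_ofReal_fract _)
      (.of_forall fun t ↦ by simpa using norm_ofReal_fract_le_one t)).locallyIntegrableOn _
  · exact .of_bound 1 (.of_forall fun t ↦ by simpa using norm_ofReal_fract_le_one t)

lemma riemannZeta_eq_mul_integral_floor {s : ℂ} (hs : 1 < s.re) :
    riemannZeta s = s * ∫ t : ℝ in Ioi 1, (⌊t⌋₊ : ℂ) * (t : ℂ) ^ (-(s + 1)) := by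
  have h_sum : (fun n : ℕ ↦ ∑ k ∈ Finset.Icc 1 n, ‖(1 : ℕ → ℂ) k‖) =O[atTop]
      fun n ↦ (n : ℝ) ^ (1 : ℝ) := by
    simpa using isBigO_refl (fun n : ℕ ↦ (n : ℝ)) atTop
  rw [← LSeries_one_eq_riemannZeta hs, LSeries_eq_mul_integral' 1 zero_le_one hs h_sum]
  simp

lemma integral_floor_mul_cpow {s : ℂ} (hs : 1 < s.re) :
    ∫ t : ℝ in Ioi 1, (⌊t⌋₊ : ℂ) * (t : ℂ) ^ (-(s + 1)) =
      (s - 1)⁻¹ - ∫ t : ℝ in Ioi 1, (t : ℂ) ^ (-(s + 1)) * (Int.fract t : ℝ) := by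
  have h_pow : IntegrableOn (fun t : ℝ ↦ (t : ℂ) ^ (-s)) (Ioi 1) :=
    integrableOn_Ioi_cpow_of_lt (by simpa using hs) zero_lt_one
  have h_fract : IntegrableOn (fun t : ℝ ↦ (t : ℂ) ^ (-(s + 1)) * (Int.fract t : ℝ)) (Ioi 1) :=
    (integrableOn_Ioi_cpow_of_lt (by simpa using zero_lt_one.trans hs) zero_lt_one).mul_bdd
      (aestronglyMeasurable_ofReal_fract _) (.of_forall norm_ofReal_fract_le_one)
  have h_split : ∀ t ∈ Ioi (1 : ℝ), (⌊t⌋₊ : ℂ) * (t : ℂ) ^ (-(s + 1)) =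
      (t : ℂ) ^ (-s) - (t : ℂ) ^ (-(s + 1)) * (Int.fract t : ℝ) := by
    intro t ht
    have ht₀ : (0 : ℝ) < t := zero_lt_one.trans ht
    have h_floor : (⌊t⌋₊ : ℂ) = t - (Int.fract t : ℝ) := by
      rw [← ofReal_sub, Int.self_sub_fract, ← natCast_floor_eq_intCast_floor ht₀.le, ofReal_natCast]
    have h_cpow : (t : ℂ) ^ (-s) = t * (t : ℂ) ^ (-(s + 1)) := by
      have ht_ne : (t : ℂ) ≠ 0 := ofReal_ne_zero.2 ht₀.ne'
      rw [neg_add', cpow_sub _ _ ht_ne, cpow_one, mul_div_cancel₀ _ ht_ne]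
    rw [h_floor, h_cpow]
    ring
  rw [setIntegral_congr_fun measurableSet_Ioi h_split, integral_sub h_pow h_fract,
    integral_Ioi_cpow_of_lt (by simpa using hs) zero_lt_one, ofReal_one, one_cpow,
    neg_div, ← one_div_neg_eq_neg_one_div, one_div, neg_add', neg_neg]

lemma riemannZeta₀_eq_one_sub_mul_integral_fract {s : ℂ} (hs : 0 < s.re) :
    riemannZeta₀ s = 1 - s * ∫ t : ℝ in Ioi 1, (t : ℂ) ^ (-(s + 1)) * (Int.fract t : ℝ) := by
  have h_left : AnalyticOnNhd ℂ riemannZeta₀ {z | 0 < z.re} :=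
    differentiable_riemannZeta₀.differentiableOn.analyticOnNhd (isOpen_re_gt 0)
  have h_right : AnalyticOnNhd ℂ
      (fun z ↦ 1 - z * ∫ t : ℝ in Ioi 1, (t : ℂ) ^ (-(z + 1)) * (Int.fract t : ℝ))
      {z | 0 < z.re} :=
    DifferentiableOn.analyticOnNhd (fun z hz ↦ ((differentiableAt_id.mul
      (differentiableAt_integral_cpow_mul_fract hz)).const_sub 1).differentiableWithinAt)
      (isOpen_re_gt 0)
  refine h_left.eqOn_of_preconnected_of_eventuallyEq h_right
    (convex_halfSpace_re_gt 0).isPreconnected (z₀ := 2) (by simp) ?_ hs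
  have h_near : ∀ᶠ z : ℂ in 𝓝 2, 1 < z.re := (isOpen_re_gt 1).mem_nhds (by simp)
  filter_upwards [h_near] with z hz
  have hz₁ : z ≠ 1 := by
    rintro rfl
    simp at hz
  have hz₀ : z - 1 ≠ 0 := sub_ne_zero.2 hz₁
  rw [riemannZeta₀, if_neg hz₁, riemannZeta_eq_mul_integral_floor hz, integral_floor_mul_cpow hz]
  field_simp
  ring

lemma riemannZeta_eq_sub_mul_integral_fract {s : ℂ} (hs : 0 < s.re) (hs₁ : s ≠ 1) :
    riemannZeta s =
      s / (s - 1) - s * ∫ t : ℝ in Ioi 1, (t : ℂ) ^ (-(s + 1)) * (Int.fract t : ℝ) := by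
  have : s - 1 ≠ 0 := sub_ne_zero.2 hs₁
  rw [riemannZeta_eq_inv_sub_add hs₁, riemannZeta₀_eq_one_sub_mul_integral_fract hs]
  field_simp
  ring

lemma riemannZeta_ofReal_eq_sub_mul_integral_fract {s : ℝ} (hs : 0 < s) (hs₁ : s ≠ 1) :
    riemannZeta s =
      ((s / (s - 1) - s * ∫ t : ℝ in Ioi 1, t ^ (-(s + 1)) * Int.fract t : ℝ) : ℂ) := by
  have h_integral : ∫ t : ℝ in Ioi 1, (t : ℂ) ^ (-((s : ℂ) + 1)) * (Int.fract t : ℝ) =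
      ((∫ t : ℝ in Ioi 1, t ^ (-(s + 1)) * Int.fract t : ℝ) : ℂ) := by
    rw [← integral_complex_ofReal]
    refine setIntegral_congr_fun measurableSet_Ioi fun t ht ↦ ?_
    simp [ofReal_cpow (zero_le_one.trans (mem_Ioi.1 ht).le)]
  rw [riemannZeta_eq_sub_mul_integral_fract (by simpa) (mod_cast hs₁), h_integral]
  push_cast
  rfl

/-- For real `0 < s < 1`, `ζ(s)` is real and strictly negative. -/
theorem riemannZeta_real_neg_of_mem_unit_interval (s : ℝ) (h0 : 0 < s) (h1 : s < 1) :
    (riemannZeta s).im = 0 ∧ (riemannZeta s).re < 0 := by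
  have h_pole : s / (s - 1) < 0 := div_neg_of_pos_of_neg h0 (sub_neg.2 h1)
  have h_integral : 0 ≤ ∫ t : ℝ in Ioi 1, t ^ (-(s + 1)) * Int.fract t :=
    setIntegral_nonneg measurableSet_Ioi fun t ht ↦
      mul_nonneg (Real.rpow_nonneg (zero_le_one.trans (mem_Ioi.1 ht).le) _) (Int.fract_nonneg t)
  rw [riemannZeta_ofReal_eq_sub_mul_integral_fract h0 h1.ne]
  exact ⟨ofReal_im _, by rw [ofReal_re]; linarith [mul_nonneg h0.le h_integral]⟩
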